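/- Let U ⊆ ℂⁿ be a nonempty connected and simply connected open set such that z_i ≠ z_j for all i ≠ j and all z ∈ U. Then the complex vector space of holomorphic maps I = (I_1,…,I_n) : U → ℂⁿ satisfying the KZ equations (2 ∂_{z_i} I_k = (I_i − I_k)/(z_i − z_k) for all k ≠ i, 2 ∂_{z_i} I_i = Σ_{j≠i} (I_j − I_i)/(z_i − z_j) for all i, and I_1 + ⋯ + I_n = 0 on U) has dimension exactly n − 1 = 2g. -/

import Mathlib

/-!
The KZ equations say that `I` is a horizontal section of a connection on the trivial bundle
`ℂⁿ` over `U`: writing `kzForm z v = ½ ∑ᵢ vᵢ Hᵢ(z)`, they read `dI = kzForm · I` together with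
`∑ I_k = 0` (`isKZSolution_iff`). The form `kzForm` is closed (`fderiv_kzForm_symm`) and its values
at a point commute (`kzForm_comm`, from the identity among `1/(z_i - z_j)` for three indices), so
the connection is flat (`kzFormReal_flat`).

For a flat form `A` with values in a Banach algebra, a local fundamental solution of `dΦ = A Φ` is
obtained by solving the linear ODE along rays from a point. The solution has the prescribed total
derivative because flatness cancels the first-order terms of the defect between neighbouring rays,
and Grönwall's inequality makes that defect quadratic (`radial_variation_bound`,
`exists_local_fundamental_solution`).

Two local fundamental solutions differ by a locally constant right factor
(`eqOn_mul_of_solutions`), so these factors glue to a bundle with discrete fibre, that is, a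
covering space of `U`. As `U` is simply connected, this covering has a section through any given
point, which yields a global fundamental solution (`exists_section_of_locallyConstant_cocycle`,
`exists_global_fundamental_solution`). Hence every initial value `v ∈ ℂⁿ` at `z₀` extends to a
horizontal section, uniquely since `U` is connected (`exists_kz_solution`, `kz_eqOn_zero`). The
coordinate sum of a horizontal section is constant (`sum_eq_zero_of_kz`), so the solutions of the KZ
equations correspond to the initial values in the hyperplane `∑ v_k = 0`, of dimension `n - 1 = 2g`.
-/

noncomputable section
open Finset

/-- A holomorphic solution on `U` of the KZ equations (with `κ = 2`) associated with the
family of hyperelliptic curves of genus `g`, `n = 2g+1`: a holomorphic map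
`I = (I_1,…,I_n) : U → ℂⁿ` with `I_1 + ⋯ + I_n = 0` on `U`,
`2 ∂_{z_i} I_k = (I_i − I_k)/(z_i − z_k)` for `k ≠ i`, and
`2 ∂_{z_i} I_i = Σ_{j≠i} (I_j − I_i)/(z_i − z_j)` on `U`. -/
def IsKZSolution (g : ℕ) (U : Set (Fin (2*g+1) → ℂ))
    (I : (Fin (2*g+1) → ℂ) → (Fin (2*g+1) → ℂ)) : Prop :=
  DifferentiableOn ℂ I U ∧
  (∀ z ∈ U, ∑ j : Fin (2*g+1), I z j = 0) ∧
  (∀ z ∈ U, ∀ i k : Fin (2*g+1), i ≠ k →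
    2 * fderiv ℂ (fun w => I w k) z (Pi.single i 1) = (I z i - I z k) / (z i - z k)) ∧
  (∀ z ∈ U, ∀ i : Fin (2*g+1),
    2 * fderiv ℂ (fun w => I w i) z (Pi.single i 1) =
      ∑ j ∈ univ \ {i}, (I z j - I z i) / (z i - z j))

section
open Set Filter Topology Metric

/-! ### Sections of locally constant cocycles and uniqueness for linear systems -/

/-- A cocycle `τ i j x` of transition maps that is locally constant in `x` defines a fibre bundle
with discrete fibre `M`, i.e. a covering map. Over a simply connected base it has a global section
with any prescribed value at a point; `s i` is the section read in the chart `V i`. The charts are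
indexed by the points of the base, the chart of index `x` containing `x`. -/
theorem exists_section_of_locallyConstant_cocycle {X M : Type*} [TopologicalSpace X]
    [SimplyConnectedSpace X] [LocallyPathConnectedSpace X]
    (V : X → Set X) (hVo : ∀ i, IsOpen (V i)) (hV : ∀ i, i ∈ V i)
    (τ : X → X → X → M → M)
    (hself : ∀ i, ∀ x ∈ V i, ∀ m, τ i i x m = m)
    (hcomp : ∀ i j k, ∀ x ∈ V i ∩ V j ∩ V k, ∀ m, τ j k x (τ i j x m) = τ i k x m)
    (hloc : ∀ i j, ∀ x ∈ V i ∩ V j, ∀ᶠ y in 𝓝 x, τ i j y = τ i j x)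
    (x₀ : X) (m₀ : M) :
    ∃ s : X → X → M, (∀ i j, ∀ x ∈ V i ∩ V j, s j x = τ i j x (s i x)) ∧
      (∀ i, ∀ x ∈ V i, ∀ᶠ y in 𝓝 x, s i y = s i x) ∧ s x₀ x₀ = m₀ := by
  let _ : TopologicalSpace M := ⊥
  have : DiscreteTopology M := ⟨rfl⟩
  let Z : FiberBundleCore X X M :=
    { baseSet := V
      isOpen_baseSet := hVo
      indexAt := id
      mem_baseSet_at := hV
      coordChange := τ
      coordChange_self := hself
      continuousOn_coordChange := by
        rintro i j ⟨x, m⟩ ⟨hx, -⟩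
        refine ContinuousAt.continuousWithinAt ?_
        have h1 : ∀ᶠ p : X × M in 𝓝 (x, m), τ i j p.1 = τ i j x :=
          (continuous_fst.tendsto (x, m)).eventually (hloc i j x hx)
        have h2 : ∀ᶠ p : X × M in 𝓝 (x, m), p.2 = m :=
          (continuous_snd.tendsto (x, m)).eventually (p := fun q => q = m)
            (by simp [nhds_discrete])
        have h3 : (fun p : X × M => τ i j p.1 p.2) =ᶠ[𝓝 (x, m)] fun _ => τ i j x m := by
          filter_upwards [h1, h2] with p hp hp'
          rw [hp, hp']
        exact continuousAt_const.congr h3.symm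
      coordChange_comp := hcomp }
  have hcov : IsCoveringMap (Bundle.TotalSpace.proj : Z.TotalSpace → X) :=
    FiberBundle.isCoveringMap (F := M) (E := Z.Fiber)
  obtain ⟨σ, ⟨hσ0, hσ⟩, -⟩ := hcov.existsUnique_continuousMap_lifts (ContinuousMap.id X) x₀
    (⟨x₀, m₀⟩ : Z.TotalSpace) rfl
  have hp : ∀ x, (σ x).proj = x := fun x => congrFun hσ x
  refine ⟨fun i x => (Z.localTriv i (σ x)).2, ?_, ?_, ?_⟩
  · intro i j x hx
    have := hcomp x i j x ⟨⟨hV x, hx.1⟩, hx.2⟩ (σ x).2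
    have e : ∀ k, (Z.localTriv k (σ x)).2 = τ x k x (σ x).2 := by
      intro k
      change τ (σ x).proj k (σ x).proj (σ x).2 = _
      rw [hp x]
    simp only [e]
    exact this.symm
  · intro i x hx
    have hc : ContinuousAt (fun y => (Z.localTriv i (σ y)).2) x := by
      have h1 : ContinuousAt (Z.localTriv i) (σ x) :=
        (Z.localTriv i).continuousAt (by
          rw [FiberBundleCore.mem_localTriv_source]
          change (σ x).proj ∈ V i
          rwa [hp x])
      exact continuous_snd.continuousAt.comp (h1.comp σ.continuous.continuousAt)
    have := hc.eventually (p := fun m => m = (Z.localTriv i (σ x)).2)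
      (by simp [nhds_discrete])
    exact this
  · change (Z.localTriv x₀ (σ x₀)).2 = m₀
    rw [hσ0]
    exact hself x₀ x₀ (hV x₀) m₀

/-- If the derivative of `Y` is locally bounded by a multiple of `Y` itself, then Grönwall's
inequality along segments shows that the zero set of `Y` is open; it is also closed, so on a
preconnected set a single zero forces `Y = 0`. -/
theorem eqOn_zero_of_norm_fderiv_le {E F : Type*} [NormedAddCommGroup E] [NormedSpace ℝ E]
    [NormedAddCommGroup F] [NormedSpace ℝ F] {U : Set E} (hU : IsOpen U)
    (hc : IsPreconnected U) {Y : E → F} {Y' : E → E →L[ℝ] F}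
    (hY : ∀ z ∈ U, HasFDerivAt Y (Y' z) z)
    (hb : ∀ z ∈ U, ∃ M : ℝ, ∀ᶠ w in 𝓝 z, ‖Y' w‖ ≤ M * ‖Y w‖)
    {z₀ : E} (hz₀ : z₀ ∈ U) (h0 : Y z₀ = 0) : ∀ z ∈ U, Y z = 0 := by
  -- the zero set and its complement are both open in `U`
  have hopen : ∀ z ∈ U, Y z = 0 → ∀ᶠ w in 𝓝 z, Y w = 0 := by
    intro z hz hYz
    obtain ⟨M, hM⟩ := hb z hz
    obtain ⟨r, hr, hball⟩ := Metric.eventually_nhds_iff_ball.1 (hM.and (hU.mem_nhds hz))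
    filter_upwards [ball_mem_nhds z hr] with w hw
    have hseg : ∀ t ∈ Icc (0:ℝ) 1, z + t • (w - z) ∈ ball z r := by
      intro t ht
      exact (convex_ball z r).add_smul_sub_mem (mem_ball_self hr) hw ht
    have hd : ∀ t ∈ Icc (0:ℝ) 1, HasDerivAt (fun t : ℝ => Y (z + t • (w - z)))
        (Y' (z + t • (w - z)) (w - z)) t := by
      intro t ht
      have h1 : HasDerivAt (fun t : ℝ => z + t • (w - z)) (w - z) t := by
        simpa using ((hasDerivAt_id t).smul_const (w - z)).const_add z
      exact (hY _ (hball _ (hseg t ht)).2).comp_hasDerivAt t h1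
    have := eq_zero_of_abs_deriv_le_mul_abs_self_of_eq_zero_right (a := 0) (b := 1)
      (K := M * ‖w - z‖) (fun t ht => (hd t ht).continuousAt.continuousWithinAt)
      (fun t ht => (hd t (Ico_subset_Icc_self ht)).hasDerivWithinAt) (by simpa using hYz)
      (by
        intro t ht
        calc ‖Y' (z + t • (w - z)) (w - z)‖ ≤ ‖Y' (z + t • (w - z))‖ * ‖w - z‖ :=
              ContinuousLinearMap.le_opNorm _ _
          _ ≤ (M * ‖Y (z + t • (w - z))‖) * ‖w - z‖ := by
              gcongr
              exact (hball _ (hseg t (Ico_subset_Icc_self ht))).1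
          _ = _ := by ring) 1 (by simp)
    simpa using this
  have hcl : IsClopen {x : U | Y x = 0} := by
    refine ⟨?_, ?_⟩
    · have : Continuous fun x : U => Y x := continuous_iff_continuousAt.2 fun x =>
        (hY x x.2).continuousAt.comp continuous_subtype_val.continuousAt
      exact isClosed_eq this continuous_const
    · rw [isOpen_iff_mem_nhds]
      intro x hx
      exact continuous_subtype_val.continuousAt.eventually (hopen x x.2 hx)
  have : PreconnectedSpace U := isPreconnected_iff_preconnectedSpace.1 hc
  have := hcl.eq_univ ⟨⟨z₀, hz₀⟩, h0⟩
  intro z hz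
  have h : (⟨z, hz⟩ : U) ∈ {x : U | Y x = 0} := this ▸ mem_univ _
  exact h

/-! ### Local fundamental solutions of flat systems -/

section Local

variable {E R : Type*} [NormedAddCommGroup E] [NormedSpace ℝ E] [NormedRing R] [NormedAlgebra ℝ R]

/-- The continuous linear map `v ↦ a v * x`. -/
noncomputable def mulRightForm (a : E →L[ℝ] R) (x : R) : E →L[ℝ] R :=
  ((ContinuousLinearMap.mul ℝ R).flip x).comp a

@[simp]
theorem mulRightForm_apply (a : E →L[ℝ] R) (x : R) (v : E) : mulRightForm a x v = a v * x := rfl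

/-- Let `y` and `y₁` solve `dy = A y` along the segments from `z₀` to `z` and to `w`, with initial
value `1`. For flat `A`, the endpoint `y₁ 1` agrees with `y 1 + A z (w - z) * y 1` up to a quadratic
error in `w - z`; this is what makes the radial solution differentiable with derivative
`A z · y 1`. -/
theorem radial_variation_bound {A : E → E →L[ℝ] R} {A' : E → E →L[ℝ] E →L[ℝ] R}
    {z₀ : E} {r M M' L : ℝ} (hr1 : r ≤ 1) (hM : 0 < M) (hM' : 0 ≤ M') (hL : 0 ≤ L)
    (hA : ∀ x ∈ ball z₀ r, HasFDerivAt A (A' x) x)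
    (hAM : ∀ x ∈ ball z₀ r, ‖A x‖ ≤ M)
    (hAM' : ∀ x ∈ ball z₀ r, ‖A' x‖ ≤ M')
    (hAL : ∀ x ∈ ball z₀ r, ∀ y ∈ ball z₀ r, ‖A' y - A' x‖ ≤ L * ‖y - x‖)
    (hflat : ∀ x ∈ ball z₀ r, ∀ u v,
      A' x u v + A x v * A x u = A' x v u + A x u * A x v)
    {z w : E} (hz : z ∈ ball z₀ r) (hw : w ∈ ball z₀ r) {y y₁ : ℝ → R} {B : ℝ}
    (hy0 : y 0 = 1) (hy₁0 : y₁ 0 = 1)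
    (hy : ∀ t ∈ Icc (0:ℝ) 1,
      HasDerivWithinAt y (A (z₀ + t • (z - z₀)) (z - z₀) * y t) (Icc 0 1) t)
    (hy₁ : ∀ t ∈ Icc (0:ℝ) 1,
      HasDerivWithinAt y₁ (A (z₀ + t • (w - z₀)) (w - z₀) * y₁ t) (Icc 0 1) t)
    (hB : ∀ t ∈ Icc (0:ℝ) 1, ‖y t‖ ≤ B) :
    ‖y₁ 1 - y 1 - A z (w - z) * y 1‖ ≤
      ((L + M' + M' * M + M * M) * B / M * (Real.exp M - 1)) * ‖w - z‖ ^ 2 := by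
  set h := w - z with hh
  set c := z - z₀ with hc
  have hwc : w - z₀ = c + h := by rw [hh, hc]; abel
  rw [hwc] at hy₁
  have hr : 0 < r := pos_of_mem_ball hz
  have hcn : ‖c‖ ≤ 1 := by
    have := mem_ball_iff_norm.1 hz
    linarith
  have hchn : ‖c + h‖ ≤ 1 := by
    have := mem_ball_iff_norm.1 hw
    rw [hwc] at this
    linarith
  have hB0 : 0 ≤ B := (norm_nonneg _).trans (hB 0 (by simp))
  have hγ : ∀ t ∈ Icc (0:ℝ) 1, z₀ + t • c ∈ ball z₀ r := fun t ht =>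
    (convex_ball z₀ r).add_smul_sub_mem (mem_ball_self hr) hz ht
  have hγ₁ : ∀ t ∈ Icc (0:ℝ) 1, z₀ + t • (c + h) ∈ ball z₀ r := fun t ht => by
    rw [← hwc]
    exact (convex_ball z₀ r).add_smul_sub_mem (mem_ball_self hr) hw ht
  have hdγ : ∀ t : ℝ, HasDerivAt (fun t : ℝ => z₀ + t • c) c t := fun t => by
    simpa using ((hasDerivAt_id t).smul_const c).const_add z₀
  -- the first-order guess for the variation of the radial solution is `A (γ t) (t • h) * y t`
  set D : ℝ → R := fun t => y₁ t - y t - A (z₀ + t • c) (t • h) * y t with hD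
  set D' : ℝ → R := fun t => A (z₀ + t • (c + h)) (c + h) * y₁ t - A (z₀ + t • c) c * y t -
    ((A' (z₀ + t • c) c (t • h) + A (z₀ + t • c) h) * y t +
      A (z₀ + t • c) (t • h) * (A (z₀ + t • c) c * y t)) with hD'
  have hDd : ∀ t ∈ Icc (0:ℝ) 1, HasDerivWithinAt D (D' t) (Icc 0 1) t := by
    intro t ht
    have h1 : HasDerivAt (fun t : ℝ => A (z₀ + t • c)) (A' (z₀ + t • c) c) t :=
      (hA _ (hγ t ht)).comp_hasDerivAt t (hdγ t)
    have h2 : HasDerivAt (fun t : ℝ => t • h) h t := by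
      simpa using (hasDerivAt_id t).smul_const h
    have h3 := h1.clm_apply h2
    exact ((hy₁ t ht).sub (hy t ht)).sub (h3.hasDerivWithinAt.mul (hy t ht))
  have hbound : ∀ t ∈ Icc (0:ℝ) 1, ‖D' t‖ ≤ M * ‖D t‖ +
      (L + M' + M' * M + M * M) * B * ‖h‖ ^ 2 := by
    intro t ht
    set x := z₀ + t • c with hx
    set x₁ := z₀ + t • (c + h) with hx₁
    set k := t • h with hk
    have hx1x : x₁ - x = k := by rw [hx₁, hx, hk]; module
    have hkn : ‖k‖ ≤ ‖h‖ := by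
      rw [hk, norm_smul, Real.norm_eq_abs, abs_of_nonneg ht.1]
      exact mul_le_of_le_one_left (norm_nonneg _) ht.2
    have hxm := hγ t ht
    have hx₁m := hγ₁ t ht
    have hseg : segment ℝ x x₁ ⊆ ball z₀ r := (convex_ball z₀ r).segment_subset hxm hx₁m
    have e1 : ‖A x₁ - A x‖ ≤ M' * ‖h‖ := by
      have := (convex_ball z₀ r).norm_image_sub_le_of_norm_hasFDerivWithin_le
        (fun ξ hξ => (hA ξ hξ).hasFDerivWithinAt) hAM' hxm hx₁m
      rw [hx1x] at this
      exact this.trans (by gcongr)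
    have e2 : ‖A x₁ - A x - A' x k‖ ≤ L * ‖h‖ * ‖h‖ := by
      have := (convex_segment x x₁).norm_image_sub_le_of_norm_hasFDerivWithin_le'
        (f := A) (f' := A') (φ := A' x) (C := L * ‖h‖)
        (fun ξ hξ => (hA ξ (hseg hξ)).hasFDerivWithinAt)
        (fun ξ hξ => (hAL x hxm ξ (hseg hξ)).trans (by
          gcongr
          refine (norm_sub_le_of_mem_segment hξ).trans ?_
          rw [hx1x]; exact hkn))
        (left_mem_segment ℝ x x₁) (right_mem_segment ℝ x x₁)
      rw [hx1x] at this
      exact this.trans (by gcongr)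
    -- flatness of `A` is what removes the terms of first order in `h` from the defect
    have hfl := hflat x hxm c k
    have key : D' t = A x₁ (c + h) * D t + ((A x₁ - A x - A' x k) (c + h) * y t +
        A' x k h * y t + (A x₁ - A x) (c + h) * (A x k * y t) + A x h * (A x k * y t)) := by
      have hfl' : A' x c k * y t = (A' x k c + A x c * A x k - A x k * A x c) * y t := by
        rw [← hfl]; simp
      simp only [hD', hD, ← hx, ← hx₁, ← hk, sub_apply, map_add]
      rw [add_mul (A' x c k), hfl']
      noncomm_ring
    rw [key]
    have b0 : ‖A x₁ (c + h) * D t‖ ≤ M * ‖D t‖ := by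
      refine (norm_mul_le _ _).trans ?_
      gcongr
      refine ((A x₁).le_opNorm _).trans ?_
      exact (mul_le_of_le_one_right (norm_nonneg _) hchn).trans (hAM _ hx₁m)
    have hyt := hB t ht
    have b1 : ‖(A x₁ - A x - A' x k) (c + h) * y t‖ ≤ L * ‖h‖ * ‖h‖ * B := by
      refine (norm_mul_le _ _).trans ?_
      gcongr
      refine (ContinuousLinearMap.le_opNorm _ _).trans ?_
      exact (mul_le_of_le_one_right (norm_nonneg _) hchn).trans e2
    have b2 : ‖A' x k h * y t‖ ≤ M' * ‖h‖ * ‖h‖ * B := by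
      refine (norm_mul_le _ _).trans ?_
      gcongr
      refine (ContinuousLinearMap.le_opNorm₂ _ _ _).trans ?_
      gcongr
      exact hAM' x hxm
    have b3' : ‖A x k * y t‖ ≤ M * ‖h‖ * B := by
      refine (norm_mul_le _ _).trans ?_
      gcongr
      refine (ContinuousLinearMap.le_opNorm _ _).trans ?_
      gcongr
      exact hAM x hxm
    have b3 : ‖(A x₁ - A x) (c + h) * (A x k * y t)‖ ≤ M' * ‖h‖ * (M * ‖h‖ * B) := by
      refine (norm_mul_le _ _).trans ?_
      gcongr
      refine (ContinuousLinearMap.le_opNorm _ _).trans ?_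
      exact (mul_le_of_le_one_right (norm_nonneg _) hchn).trans e1
    have b4 : ‖A x h * (A x k * y t)‖ ≤ M * ‖h‖ * (M * ‖h‖ * B) := by
      refine (norm_mul_le _ _).trans ?_
      gcongr
      refine (ContinuousLinearMap.le_opNorm _ _).trans ?_
      gcongr
      exact hAM x hxm
    refine (norm_add_le _ _).trans (add_le_add b0 ?_)
    refine (norm_add₄_le).trans ?_
    nlinarith [b1, b2, b3, b4]
  have hgr := norm_le_gronwallBound_of_norm_deriv_right_le (a := 0) (b := 1) (δ := 0)
    (fun t ht => (hDd t ht).continuousWithinAt)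
    (fun t ht => (hDd t (Ico_subset_Icc_self ht)).mono_of_mem_nhdsWithin
      (Icc_mem_nhdsGE_of_mem ht))
    (by simp [hD, hy0, hy₁0]) (fun t ht => hbound t (Ico_subset_Icc_self ht)) 1 (by simp)
  rw [gronwallBound_of_K_ne_0 hM.ne'] at hgr
  have hzc : z₀ + c = z := by rw [hc]; abel
  simp only [hD, one_smul, hzc, zero_mul, zero_add, sub_zero, mul_one] at hgr
  refine hgr.trans (le_of_eq ?_)
  ring

/-- Picard–Lindelöf on the whole of `[0, 1]` along a ray; the radius is taken so small that the
solution stays in the closed unit ball around `1`. -/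
theorem exists_radial_solution [CompleteSpace R] {A : E → E →L[ℝ] R} {z₀ z : E} {r M : ℝ}
    (hM : 0 ≤ M) (hrM : M * r * (‖(1 : R)‖ + 1) ≤ 1)
    (hA : ContinuousOn A (ball z₀ r)) (hAM : ∀ x ∈ ball z₀ r, ‖A x‖ ≤ M)
    (hz : z ∈ ball z₀ r) :
    ∃ y : ℝ → R, y 0 = 1 ∧ ∀ t ∈ Icc (0:ℝ) 1,
      HasDerivWithinAt y (A (z₀ + t • (z - z₀)) (z - z₀) * y t) (Icc 0 1) t := by
  have hr : 0 < r := pos_of_mem_ball hz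
  have hγ : ∀ t ∈ Icc (0:ℝ) 1, z₀ + t • (z - z₀) ∈ ball z₀ r := fun t ht =>
    (convex_ball z₀ r).add_smul_sub_mem (mem_ball_self hr) hz ht
  have hn : ∀ t ∈ Icc (0:ℝ) 1, ‖A (z₀ + t • (z - z₀)) (z - z₀)‖ ≤ M * r := by
    intro t ht
    refine (ContinuousLinearMap.le_opNorm _ _).trans ?_
    gcongr
    · exact hAM _ (hγ t ht)
    · exact (mem_ball_iff_norm.1 hz).le
  have hPL : IsPicardLindelof (fun t x => A (z₀ + t • (z - z₀)) (z - z₀) * x)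
      (⟨0, by simp⟩ : Icc (0:ℝ) 1) (1 : R) 1 0 1 ⟨M * r, by positivity⟩ := by
    refine ⟨?_, ?_, ?_, ?_⟩
    · intro t ht
      refine LipschitzOnWith.of_dist_le_mul fun x _ y _ => ?_
      rw [dist_eq_norm, dist_eq_norm, ← mul_sub]
      refine (norm_mul_le _ _).trans ?_
      gcongr
      exact hn t ht
    · intro x _
      have h1 : ContinuousOn (fun t : ℝ => A (z₀ + t • (z - z₀))) (Icc 0 1) :=
        hA.comp (by fun_prop) hγ
      exact (h1.clm_apply continuousOn_const).mul continuousOn_const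
    · intro t ht x hx
      have hx' : ‖x‖ ≤ ‖(1 : R)‖ + 1 := by
        have h1 : ‖x - 1‖ ≤ 1 := by simpa [dist_eq_norm] using hx
        have h2 := norm_add_le (x - 1) 1
        rw [sub_add_cancel] at h2
        linarith
      refine (norm_mul_le _ _).trans ?_
      refine le_trans ?_ hrM
      gcongr
      exact hn t ht
    · simp
  exact hPL.exists_eq_forall_mem_Icc_hasDerivWithinAt₀

/-- Frobenius integrability for the linear system `dΦ = A Φ`: flatness of `A` near `z₀` yields an
invertible solution on a ball around `z₀`. -/
theorem exists_local_fundamental_solution [CompleteSpace R] {A : E → E →L[ℝ] R} {z₀ : E}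
    (hA : ContDiffAt ℝ 2 A z₀)
    (hflat : ∀ᶠ x in 𝓝 z₀, ∀ u v,
      fderiv ℝ A x u v + A x v * A x u = fderiv ℝ A x v u + A x u * A x v) :
    ∃ r > 0, ∃ Φ : E → R, ∀ z ∈ ball z₀ r,
      IsUnit (Φ z) ∧ HasFDerivAt Φ (mulRightForm (A z) (Φ z)) z := by
  set M := ‖A z₀‖ + 1 with hMdef
  set M' := ‖fderiv ℝ A z₀‖ + 1 with hM'def
  have hM : 0 < M := by positivity
  have hM' : 0 < M' := by positivity
  have hA' : ContDiffAt ℝ 1 (fderiv ℝ A) z₀ := hA.fderiv_right (by norm_num)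
  obtain ⟨L, s, hs, hLs⟩ := hA'.exists_lipschitzOnWith
  have e1 : ∀ᶠ x in 𝓝 z₀, ‖A x‖ < M :=
    hA.continuousAt.norm.eventually (gt_mem_nhds (by simp [hMdef]))
  have e2 : ∀ᶠ x in 𝓝 z₀, ‖fderiv ℝ A x‖ < M' :=
    have hn : Tendsto (fun x => ‖fderiv ℝ A x‖) (𝓝 z₀) (𝓝 ‖fderiv ℝ A z₀‖) :=
      ContinuousAt.norm (E := E →L[ℝ] E →L[ℝ] R) hA'.continuousAt
    hn.eventually_lt_const (lt_add_one _)
  have e3 : ∀ᶠ x in 𝓝 z₀, DifferentiableAt ℝ A x :=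
    (hA.eventually (by simp)).mono fun x hx => hx.differentiableAt (by simp)
  obtain ⟨r₀, hr₀, hball⟩ := Metric.eventually_nhds_iff_ball.1
    (((e1.and e2).and (e3.and hs)).and hflat)
  set N := ‖(1 : R)‖ + 1 with hN
  have hNpos : 0 < N := by positivity
  set r := min r₀ (min 1 (1 / (M * N))) with hrdef
  have hr : 0 < r := by positivity
  have hrr₀ : ball z₀ r ⊆ ball z₀ r₀ := ball_subset_ball (min_le_left _ _)
  have hr1 : r ≤ 1 := (min_le_right _ _).trans (min_le_left _ _)
  have hrM : M * r * N ≤ 1 := by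
    have : r ≤ 1 / (M * N) := (min_le_right _ _).trans (min_le_right _ _)
    rw [le_div_iff₀ (by positivity)] at this
    linarith
  have hAd : ∀ x ∈ ball z₀ r, HasFDerivAt A (fderiv ℝ A x) x := fun x hx =>
    (hball x (hrr₀ hx)).1.2.1.hasFDerivAt
  have hAM : ∀ x ∈ ball z₀ r, ‖A x‖ ≤ M := fun x hx => (hball x (hrr₀ hx)).1.1.1.le
  have hex : ∀ z, ∃ y : ℝ → R, z ∈ ball z₀ r → y 0 = 1 ∧ ∀ t ∈ Icc (0:ℝ) 1,
      HasDerivWithinAt y (A (z₀ + t • (z - z₀)) (z - z₀) * y t) (Icc 0 1) t := by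
    intro z
    by_cases hz : z ∈ ball z₀ r
    · obtain ⟨y, hy⟩ := exists_radial_solution hM.le hrM
        (fun x hx => (hAd x hx).continuousAt.continuousWithinAt) hAM hz
      exact ⟨y, fun _ => hy⟩
    · exact ⟨0, fun h => absurd h hz⟩
  choose y hy using hex
  have hder : ∀ z ∈ ball z₀ r, HasFDerivAt (fun w => y w 1) (mulRightForm (A z) (y z 1)) z := by
    intro z hz
    obtain ⟨B, hB⟩ := isCompact_Icc.exists_bound_of_continuousOn
      (fun t ht => ((hy z hz).2 t ht).continuousWithinAt)
    have hO : (fun w => y w 1 - y z 1 - mulRightForm (A z) (y z 1) (w - z)) =O[𝓝 z]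
        fun w => ‖w - z‖ ^ 2 := by
      refine Asymptotics.IsBigO.of_bound
        ((L + M' + M' * M + M * M) * B / M * (Real.exp M - 1)) ?_
      filter_upwards [isOpen_ball.mem_nhds hz] with w hw
      rw [norm_pow, norm_norm]
      exact radial_variation_bound hr1 hM hM'.le L.2 hAd hAM
        (fun x hx => (hball x (hrr₀ hx)).1.1.2.le)
        (fun x hx x' hx' => hLs.norm_sub_le (hball x' (hrr₀ hx')).1.2.2
          (hball x (hrr₀ hx)).1.2.2)
        (fun x hx => (hball x (hrr₀ hx)).2) hz hw (hy z hz).1 (hy w hw).1 (hy z hz).2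
        (hy w hw).2 hB
    refine HasFDerivAt.of_isLittleO (hO.trans_isLittleO ?_)
    exact Asymptotics.isLittleO_norm_pow_id one_lt_two |>.comp_tendsto
      (tendsto_sub_nhds_zero_iff.2 tendsto_id)
  have hone : y z₀ 1 = 1 := by
    have hz₀ : z₀ ∈ ball z₀ r := mem_ball_self hr
    have := (convex_Icc (0:ℝ) 1).norm_image_sub_le_of_norm_hasDerivWithin_le (C := 0)
      (hy z₀ hz₀).2 (by simp) (x := 0) (y := 1) (by simp) (by simp)
    rw [zero_mul, norm_le_zero_iff, sub_eq_zero, (hy z₀ hz₀).1] at this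
    exact this
  have hunit : ∀ᶠ z in 𝓝 z₀, IsUnit (y z 1) := by
    refine (hder z₀ (mem_ball_self hr)).continuousAt.eventually ?_
    exact Units.isOpen.mem_nhds (by simp [hone])
  obtain ⟨ρ, hρ, hball'⟩ := Metric.eventually_nhds_iff_ball.1
    (hunit.and (ball_mem_nhds z₀ hr))
  exact ⟨ρ, hρ, fun z => y z 1, fun z hz => ⟨(hball' z hz).1, hder z (hball' z hz).2⟩⟩

end Local

/-! ### Global fundamental solutions on simply connected sets -/

section Global

variable {E R : Type*} [NormedAddCommGroup E] [NormedSpace ℝ E] [NormedRing R] [NormedAlgebra ℝ R]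

theorem norm_mulRightForm_le (a : E →L[ℝ] R) (x : R) : ‖mulRightForm a x‖ ≤ ‖a‖ * ‖x‖ := by
  refine ContinuousLinearMap.opNorm_le_bound _ (by positivity) fun v => ?_
  rw [mulRightForm_apply]
  refine (norm_mul_le _ _).trans ?_
  have := a.le_opNorm v
  nlinarith [norm_nonneg x]

theorem mulRightForm_mul (a : E →L[ℝ] R) (x c : R) :
    mulRightForm a (x * c) = ((ContinuousLinearMap.mul ℝ R).flip c).comp (mulRightForm a x) := by
  ext v
  simp [mul_assoc]

theorem HasFDerivAt.solution_mul_const {Φ : E → R} {a : E →L[ℝ] R} {z : E}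
    (h : HasFDerivAt Φ (mulRightForm a (Φ z)) z) (c : R) :
    HasFDerivAt (fun w => Φ w * c) (mulRightForm a (Φ z * c)) z := by
  rw [mulRightForm_mul]
  exact ((ContinuousLinearMap.mul ℝ R).flip c).hasFDerivAt.comp z h

/-- On a preconnected set two solutions of `dΦ = A Φ` differ by a constant right factor, which is
determined at any point where one of them is invertible. -/
theorem eqOn_mul_of_solutions {A : E → E →L[ℝ] R} {Φ₁ Φ₂ : E → R} {W : Set E} (hW : IsOpen W)
    (hWc : IsPreconnected W) (hA : ∀ z ∈ W, ContinuousAt A z)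
    (h₁ : ∀ z ∈ W, HasFDerivAt Φ₁ (mulRightForm (A z) (Φ₁ z)) z)
    (h₂ : ∀ z ∈ W, HasFDerivAt Φ₂ (mulRightForm (A z) (Φ₂ z)) z)
    {x : E} (hx : x ∈ W) (hu : IsUnit (Φ₂ x)) {z : E} (hz : z ∈ W) :
    Φ₁ z = Φ₂ z * (Ring.inverse (Φ₂ x) * Φ₁ x) := by
  set c := Ring.inverse (Φ₂ x) * Φ₁ x with hc
  have key := eqOn_zero_of_norm_fderiv_le hW hWc (Y := fun z => Φ₁ z - Φ₂ z * c)
    (Y' := fun z => mulRightForm (A z) (Φ₁ z - Φ₂ z * c))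
    (fun z hz => by
      have := (h₁ z hz).sub ((h₂ z hz).solution_mul_const c)
      convert! this using 1
      ext v
      simp [mul_sub])
    (fun z hz => ⟨‖A z‖ + 1, by
      filter_upwards [(hA z hz).norm.eventually (gt_mem_nhds (lt_add_one ‖A z‖))] with w hw
      refine (norm_mulRightForm_le _ _).trans ?_
      gcongr⟩)
    hx (by simp [hc, ← mul_assoc, Ring.mul_inverse_cancel _ hu])
  exact sub_eq_zero.1 (key z hz)

/-- The local fundamental solutions `Φ i` have locally constant transition factors
`(Φ j)⁻¹ Φ i`; a global section `s` of that cocycle gives the global solution `Φ i * s i`. -/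
theorem exists_global_fundamental_solution [CompleteSpace R] {A : E → E →L[ℝ] R} {U : Set E}
    (hU : IsOpen U) (hsc : SimplyConnectedSpace U) (hA : ∀ z ∈ U, ContDiffAt ℝ 2 A z)
    (hflat : ∀ x ∈ U, ∀ u v,
      fderiv ℝ A x u v + A x v * A x u = fderiv ℝ A x v u + A x u * A x v)
    {z₀ : E} (hz₀ : z₀ ∈ U) :
    ∃ Ψ : E → R, Ψ z₀ = 1 ∧ ∀ z ∈ U, HasFDerivAt Ψ (mulRightForm (A z) (Ψ z)) z := by
  classical
  have hloc : ∀ x : U, ∃ r > 0, ∃ Φ : E → R, ∀ z ∈ ball (x : E) r,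
      IsUnit (Φ z) ∧ HasFDerivAt Φ (mulRightForm (A z) (Φ z)) z := fun x =>
    exists_local_fundamental_solution (hA x x.2)
      (mem_of_superset (hU.mem_nhds x.2) fun z hz => hflat z hz)
  choose r hr Φ hΦ using hloc
  have : LocallyPathConnectedSpace U := hU.locallyPathConnectedSpace
  set V : U → Set U := fun i => {y | (y : E) ∈ ball (i : E) (r i)} with hVdef
  obtain ⟨s, hs1, hs2, hs0⟩ := exists_section_of_locallyConstant_cocycle V
    (fun i => isOpen_ball.preimage continuous_subtype_val)
    (fun i => mem_ball_self (hr i))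
    (fun i j x m => Ring.inverse (Φ j x) * Φ i x * m)
    (fun i x hx m => by
      simp [Ring.inverse_mul_cancel _ (hΦ i x hx).1])
    (fun i j k x hx m => by
      have h := Ring.mul_inverse_cancel _ (hΦ j x hx.1.2).1
      calc Ring.inverse (Φ k x) * Φ j x * (Ring.inverse (Φ j x) * Φ i x * m)
          = Ring.inverse (Φ k x) * (Φ j x * Ring.inverse (Φ j x)) * Φ i x * m := by
            noncomm_ring
        _ = _ := by rw [h, mul_one])
    (fun i j x hx => by
      have hWo : IsOpen (ball (i : E) (r i) ∩ ball (j : E) (r j) ∩ U) :=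
        (isOpen_ball.inter isOpen_ball).inter hU
      obtain ⟨ρ, hρ, hsub⟩ := Metric.isOpen_iff.1 hWo x ⟨hx, x.2⟩
      have hev : ∀ᶠ y : U in 𝓝 x, (y : E) ∈ ball (x : E) ρ :=
        continuous_subtype_val.continuousAt.eventually (ball_mem_nhds _ hρ)
      filter_upwards [hev] with y hy
      have h := eqOn_mul_of_solutions (A := A) (Φ₁ := Φ i) (Φ₂ := Φ j) isOpen_ball
        (convex_ball (x : E) ρ).isPreconnected
        (fun z hz => (hA z (hsub hz).2).continuousAt)
        (fun z hz => (hΦ i z (hsub hz).1.1).2) (fun z hz => (hΦ j z (hsub hz).1.2).2)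
        (mem_ball_self hρ) (hΦ j x hx.2).1 hy
      funext m
      rw [h, ← mul_assoc, Ring.inverse_mul_cancel _ (hΦ j y (hsub hy).1.2).1, one_mul])
    ⟨z₀, hz₀⟩ (Ring.inverse (Φ ⟨z₀, hz₀⟩ z₀))
  -- in the chart around `i` the section is represented by `Φ i * s i`
  set Ψ : E → R := fun z => if h : z ∈ U then Φ ⟨z, h⟩ z * s ⟨z, h⟩ ⟨z, h⟩ else 0 with hΨ
  have hchart : ∀ i x : U, x ∈ V i → Ψ x = Φ i x * s i x := by
    intro i x hx
    have hxx : x ∈ V x := mem_ball_self (hr x)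
    have h1 : Ψ x = Φ x x * s x x := by simp [hΨ]
    rw [h1, hs1 i x x ⟨hx, hxx⟩, ← mul_assoc, ← mul_assoc,
      Ring.mul_inverse_cancel _ (hΦ x x hxx).1, one_mul]
  refine ⟨Ψ, ?_, ?_⟩
  · have h1 := hchart ⟨z₀, hz₀⟩ ⟨z₀, hz₀⟩ (mem_ball_self (hr _))
    rw [hs0] at h1
    exact h1.trans (Ring.mul_inverse_cancel _ (hΦ ⟨z₀, hz₀⟩ z₀ (mem_ball_self (hr _))).1)
  · intro z hz
    set x : U := ⟨z, hz⟩ with hxdef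
    have hxx : x ∈ V x := mem_ball_self (hr x)
    have hVn : ∀ᶠ y : U in 𝓝 x, y ∈ V x :=
      (isOpen_ball.preimage continuous_subtype_val).mem_nhds hxx
    have hev : ∀ᶠ y : U in 𝓝 x, Ψ y = Φ x y * s x x := by
      filter_upwards [hs2 x x hxx, hVn] with y hy hyV
      rw [hchart x y hyV, hy]
    have hev' : Ψ =ᶠ[𝓝 z] fun w => Φ x w * s x x := by
      have hmap := hU.isOpenEmbedding_subtypeVal.map_nhds_eq x
      change ∀ᶠ w in 𝓝 z, _
      rw [show 𝓝 z = 𝓝 ((x : U) : E) from rfl, ← hmap, eventually_map]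
      exact hev
    rw [hev'.self_of_nhds]
    exact ((hΦ x z hxx).2.solution_mul_const _).congr_of_eventuallyEq hev'

end Global

/-! ### The KZ connection -/

section KZ

variable {n : ℕ}

/-- The operator `f ↦ (f j - f k) e_k` on `ℂⁿ`; thus `Ω_{jk} = kzN k j + kzN j k`. -/
noncomputable def kzN (k j : Fin n) : (Fin n → ℂ) →L[ℂ] (Fin n → ℂ) :=
  ((ContinuousLinearMap.proj j : (Fin n → ℂ) →L[ℂ] ℂ) - ContinuousLinearMap.proj k).smulRight
    (Pi.single k 1)

/-- The constant operator-valued form `v ↦ ((v k - v j) / 2) • kzN k j`. -/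
noncomputable def kzC (k j : Fin n) :
    (Fin n → ℂ) →L[ℂ] (Fin n → ℂ) →L[ℂ] (Fin n → ℂ) :=
  ((ContinuousLinearMap.proj k : (Fin n → ℂ) →L[ℂ] ℂ) - ContinuousLinearMap.proj j).smulRight
    ((2 : ℂ)⁻¹ • kzN k j)

/-- The connection form of the KZ system, `v ↦ ½ ∑ᵢ vᵢ Hᵢ(z)`, written as the sum over ordered
pairs `(k, j)` of `½ (v k - v j) / (z k - z j) • kzN k j`. Diagonal terms vanish. -/
noncomputable def kzForm (z : Fin n → ℂ) :
    (Fin n → ℂ) →L[ℂ] (Fin n → ℂ) →L[ℂ] (Fin n → ℂ) :=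
  ∑ k, ∑ j, (z k - z j)⁻¹ • kzC k j

theorem kzC_apply (k j : Fin n) (v : Fin n → ℂ) :
    kzC k j v = ((v k - v j) * 2⁻¹) • kzN k j := by
  simp [kzC, smul_smul]

theorem kzForm_apply (z v f : Fin n → ℂ) (k : Fin n) :
    kzForm z v f k = ∑ j, (v k - v j) / (z k - z j) * (f j - f k) / 2 := by
  simp only [kzForm, _root_.sum_apply, Finset.sum_apply, smul_apply, Pi.smul_apply, kzC_apply, kzN,
    ContinuousLinearMap.smulRight_apply, sub_apply, ContinuousLinearMap.proj_apply, smul_eq_mul]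
  rw [Finset.sum_eq_single k]
  · refine Finset.sum_congr rfl fun j _ => ?_
    simp
    ring
  · intro i _ hi
    refine Finset.sum_eq_zero fun j _ => ?_
    simp [hi.symm]
  · simp

theorem kzC_self (k : Fin n) : kzC k k = 0 := by
  ext v f i
  simp [kzC_apply]

theorem contDiffAt_inv_sub_smul {F : Type*} [NormedAddCommGroup F] [NormedSpace ℂ F] {k j : Fin n}
    {C : F} (hC : k = j → C = 0) {z : Fin n → ℂ} (hz : ∀ i j, i ≠ j → z i ≠ z j) :
    ContDiffAt ℂ 2 (fun w : Fin n → ℂ => (w k - w j)⁻¹ • C) z := by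
  by_cases h : k = j
  · simp only [hC h, smul_zero]
    exact contDiffAt_const
  · refine ContDiffAt.fun_smul ?_ contDiffAt_const
    refine ContDiffAt.fun_inv ?_ (sub_ne_zero.2 (hz k j h))
    fun_prop

theorem hasFDerivAt_inv_sub_smul {F : Type*} [NormedAddCommGroup F] [NormedSpace ℂ F]
    {k j : Fin n} {C : F} (hC : k = j → C = 0) {z : Fin n → ℂ} (hz : ∀ i j, i ≠ j → z i ≠ z j) :
    HasFDerivAt (fun w : Fin n → ℂ => (w k - w j)⁻¹ • C) ((-((z k - z j) ^ 2)⁻¹ •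
      ((ContinuousLinearMap.proj k : (Fin n → ℂ) →L[ℂ] ℂ) -
        ContinuousLinearMap.proj j)).smulRight C) z := by
  by_cases h : k = j
  · simp only [hC h, smul_zero, ContinuousLinearMap.smulRight_zero]
    exact hasFDerivAt_const _ _
  · refine HasFDerivAt.smul_const ?_ _
    have h1 : HasFDerivAt (fun w : Fin n → ℂ => w k - w j)
        ((ContinuousLinearMap.proj k : (Fin n → ℂ) →L[ℂ] ℂ) - ContinuousLinearMap.proj j) z :=
      (hasFDerivAt_apply k z).sub (hasFDerivAt_apply j z)
    exact (hasDerivAt_inv (sub_ne_zero.2 (hz k j h))).comp_hasFDerivAt z h1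

theorem contDiffAt_kzForm {z : Fin n → ℂ} (hz : ∀ i j, i ≠ j → z i ≠ z j) :
    ContDiffAt ℂ 2 kzForm z := by
  unfold kzForm
  exact ContDiffAt.sum fun k _ => ContDiffAt.sum fun j _ =>
    contDiffAt_inv_sub_smul (F := (Fin n → ℂ) →L[ℂ] (Fin n → ℂ) →L[ℂ] (Fin n → ℂ))
      (fun h => by rw [h, kzC_self]) hz

theorem hasFDerivAt_kzForm {z : Fin n → ℂ} (hz : ∀ i j, i ≠ j → z i ≠ z j) :
    HasFDerivAt kzForm (∑ k, ∑ j, (-((z k - z j) ^ 2)⁻¹ •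
      ((ContinuousLinearMap.proj k : (Fin n → ℂ) →L[ℂ] ℂ) -
        ContinuousLinearMap.proj j)).smulRight (kzC k j)) z := by
  unfold kzForm
  exact HasFDerivAt.fun_sum fun k _ => HasFDerivAt.fun_sum fun j _ =>
    hasFDerivAt_inv_sub_smul (F := (Fin n → ℂ) →L[ℂ] (Fin n → ℂ) →L[ℂ] (Fin n → ℂ))
      (fun h => by rw [h, kzC_self]) hz

/-- The KZ form is closed. -/
theorem fderiv_kzForm_symm {z : Fin n → ℂ} (hz : ∀ i j, i ≠ j → z i ≠ z j) (u v : Fin n → ℂ) :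
    fderiv ℂ kzForm z u v = fderiv ℂ kzForm z v u := by
  rw [(hasFDerivAt_kzForm hz).fderiv]
  simp only [_root_.sum_apply, ContinuousLinearMap.smulRight_apply, smul_apply, sub_apply,
    ContinuousLinearMap.proj_apply, kzC_apply, smul_smul, smul_eq_mul]
  refine Finset.sum_congr rfl fun k _ => Finset.sum_congr rfl fun j _ => ?_
  congr 1
  ring

theorem sum_sum_eq_zero_of_antisymm {W : Fin n → Fin n → ℂ} (h : ∀ j l, W j l + W l j = 0) :
    ∑ j, ∑ l, W j l = 0 := by
  have h1 : ∑ j, ∑ l, W j l + ∑ j, ∑ l, W j l = 0 := by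
    conv_lhs => rw [add_comm]; enter [1]; rw [Finset.sum_comm]
    simp only [← Finset.sum_add_distrib, h, add_comm, Finset.sum_const_zero]
  simpa using h1

/-- The weighted graph Laplacians `f ↦ (∑ j, a k j * (f j - f k))ₖ` and the same with weights `b`
commute as soon as the weights satisfy the three-index relation `hab`. -/
theorem weighted_laplacian_comm (a b : Fin n → Fin n → ℂ)
    (hab : ∀ k j l, j ≠ l → a k j * b j l - b k j * a j l - a k j * b k l
      - (a k l * b l j - b k l * a l j - a k l * b k j) = 0) (f : Fin n → ℂ) (k : Fin n) :
    ∑ j, a k j * ((∑ l, b j l * (f l - f j)) - ∑ l, b k l * (f l - f k)) =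
      ∑ j, b k j * ((∑ l, a j l * (f l - f j)) - ∑ l, a k l * (f l - f k)) := by
  have e : ∀ p q : Fin n → Fin n → ℂ,
      ∑ j, p k j * ((∑ l, q j l * (f l - f j)) - ∑ l, q k l * (f l - f k)) =
      ∑ j, ∑ l, (p k j * q j l * (f l - f j) - p k j * q k l * (f l - f k)) := by
    intro p q
    refine Finset.sum_congr rfl fun j _ => ?_
    rw [← Finset.sum_sub_distrib, Finset.mul_sum]
    exact Finset.sum_congr rfl fun l _ => by ring
  rw [e, e, ← sub_eq_zero]
  simp only [← Finset.sum_sub_distrib]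
  refine sum_sum_eq_zero_of_antisymm fun j l => ?_
  by_cases hjl : j = l
  · subst hjl
    ring
  · linear_combination (f l - f j) * hab k j l hjl

/-- The Gaudin Hamiltonians at `z` commute. -/
theorem kzForm_comm {z : Fin n → ℂ} (hz : ∀ i j, i ≠ j → z i ≠ z j) (u v : Fin n → ℂ) :
    kzForm z u * kzForm z v = kzForm z v * kzForm z u := by
  ext f k
  have e : ∀ (p q : Fin n → ℂ), (kzForm z p * kzForm z q) f k =
      ∑ j, (p k - p j) / (z k - z j) / 2 * ((∑ l, (q j - q l) / (z j - z l) / 2 * (f l - f j)) -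
        ∑ l, (q k - q l) / (z k - z l) / 2 * (f l - f k)) := by
    intro p q
    change kzForm z p (kzForm z q f) k = _
    simp only [kzForm_apply]
    have e2 : ∀ i, ∑ j, (q i - q j) / (z i - z j) * (f j - f i) / 2 =
        ∑ l, (q i - q l) / (z i - z l) / 2 * (f l - f i) := fun i =>
      Finset.sum_congr rfl fun j _ => by ring
    refine Finset.sum_congr rfl fun j _ => ?_
    rw [e2, e2]
    ring
  rw [e, e]
  refine weighted_laplacian_comm (fun k j => (u k - u j) / (z k - z j) / 2)
    (fun k j => (v k - v j) / (z k - z j) / 2) ?_ f k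
  intro k j l hjl
  have h1 := sub_ne_zero.2 (hz j l hjl)
  have h1' := sub_ne_zero.2 (hz l j (Ne.symm hjl))
  have e1 : z l - z j = -(z j - z l) := by ring
  by_cases hkj : k = j
  · subst hkj
    simp only [sub_self, zero_div, zero_mul]
    rw [e1]
    field_simp
    ring
  by_cases hkl : k = l
  · subst hkl
    simp only [sub_self, zero_div, zero_mul]
    rw [e1]
    field_simp
    ring
  have h2 := sub_ne_zero.2 (hz k j hkj)
  have h3 := sub_ne_zero.2 (hz k l hkl)
  simp only [e1]
  field_simp
  ring

theorem sum_kzForm_apply (z v f : Fin n → ℂ) : ∑ k, kzForm z v f k = 0 := by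
  simp only [kzForm_apply]
  refine sum_sum_eq_zero_of_antisymm fun j l => ?_
  have e : (v l - v j) / (z l - z j) = (v j - v l) / (z j - z l) := by
    rw [← neg_sub (v j), ← neg_sub (z j), neg_div_neg_eq]
  rw [e]
  ring

theorem kzForm_single_of_ne (z f : Fin n → ℂ) {i k : Fin n} (h : i ≠ k) :
    2 * kzForm z (Pi.single i 1) f k = (f i - f k) / (z i - z k) := by
  rw [kzForm_apply, Finset.sum_eq_single i]
  · rw [Pi.single_eq_same, Pi.single_eq_of_ne h.symm, ← neg_sub (z i)]
    rw [zero_sub, div_neg, neg_div, neg_neg]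
    ring
  · intro j _ hj
    simp [Pi.single_eq_of_ne hj, Pi.single_eq_of_ne h.symm]
  · simp

theorem kzForm_single_self (z f : Fin n → ℂ) (i : Fin n) :
    2 * kzForm z (Pi.single i 1) f i =
      ∑ j ∈ Finset.univ \ {i}, (f j - f i) / (z i - z j) := by
  rw [kzForm_apply, Finset.mul_sum, ← Finset.sum_sdiff (Finset.subset_univ {i})]
  simp only [Finset.sum_singleton, sub_self, zero_div, mul_zero, add_zero]
  refine Finset.sum_congr rfl fun j hj => ?_
  have hj' : j ≠ i := by simpa using hj
  rw [Pi.single_eq_same, Pi.single_eq_of_ne hj']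
  ring

/-- The KZ connection form with its complex linearity forgotten. -/
noncomputable def kzFormReal (z : Fin n → ℂ) :
    (Fin n → ℂ) →L[ℝ] ((Fin n → ℂ) →L[ℂ] (Fin n → ℂ)) :=
  (kzForm z).restrictScalars ℝ

theorem contDiffAt_restrictScalars_clm {E F : Type*} [NormedAddCommGroup E] [NormedSpace ℂ E]
    [NormedAddCommGroup F] [NormedSpace ℂ F] {f : E → E →L[ℂ] F} {z : E}
    (hf : ContDiffAt ℂ 2 f z) : ContDiffAt ℝ 2 (fun w => (f w).restrictScalars ℝ) z :=
  (ContinuousLinearMap.restrictScalarsL ℂ E F ℝ ℝ).contDiff.contDiffAt.comp z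
    (hf.restrict_scalars ℝ)

theorem fderiv_restrictScalars_clm {E F : Type*} [NormedAddCommGroup E] [NormedSpace ℂ E]
    [NormedAddCommGroup F] [NormedSpace ℂ F] {f : E → E →L[ℂ] F} {z : E}
    (hf : DifferentiableAt ℂ f z) (u v : E) :
    fderiv ℝ (fun w => (f w).restrictScalars ℝ) z u v = fderiv ℂ f z u v := by
  have h : HasFDerivAt (fun w => (f w).restrictScalars ℝ) _ z :=
    (ContinuousLinearMap.restrictScalarsL ℂ E F ℝ ℝ).hasFDerivAt.comp z
      (hf.hasFDerivAt.restrictScalars ℝ)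
  rw [h.fderiv]
  rfl

theorem contDiffAt_kzFormReal {z : Fin n → ℂ} (hz : ∀ i j, i ≠ j → z i ≠ z j) :
    ContDiffAt ℝ 2 kzFormReal z :=
  contDiffAt_restrictScalars_clm (F := (Fin n → ℂ) →L[ℂ] (Fin n → ℂ)) (contDiffAt_kzForm hz)

theorem fderiv_kzFormReal {z : Fin n → ℂ} (hz : ∀ i j, i ≠ j → z i ≠ z j) (u v : Fin n → ℂ) :
    fderiv ℝ kzFormReal z u v = fderiv ℂ kzForm z u v :=
  fderiv_restrictScalars_clm (F := (Fin n → ℂ) →L[ℂ] (Fin n → ℂ))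
    (hasFDerivAt_kzForm hz).differentiableAt u v

/-- The KZ connection is flat: its form is closed and its values at a point commute. -/
theorem kzFormReal_flat {z : Fin n → ℂ} (hz : ∀ i j, i ≠ j → z i ≠ z j) (u v : Fin n → ℂ) :
    fderiv ℝ kzFormReal z u v + kzFormReal z v * kzFormReal z u =
      fderiv ℝ kzFormReal z v u + kzFormReal z u * kzFormReal z v := by
  rw [fderiv_kzFormReal hz, fderiv_kzFormReal hz, fderiv_kzForm_symm hz u v]
  congr 1
  exact kzForm_comm hz v u

/-- The componentwise KZ equations are equivalent to the total differential equation
`dI = kzForm · I` together with `∑ I_k = 0`. -/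
theorem isKZSolution_iff {g : ℕ} {U : Set (Fin (2*g+1) → ℂ)} (hU : IsOpen U)
    {I : (Fin (2*g+1) → ℂ) → (Fin (2*g+1) → ℂ)} :
    IsKZSolution g U I ↔ (∀ z ∈ U, HasFDerivAt I ((kzForm z).flip (I z)) z) ∧
      ∀ z ∈ U, ∑ j, I z j = 0 := by
  have hcomp : ∀ {z : Fin (2*g+1) → ℂ}, DifferentiableAt ℂ I z → ∀ (k : Fin (2*g+1)) u,
      fderiv ℂ (fun w => I w k) z u = fderiv ℂ I z u k := by
    intro z hd k u
    have h : HasFDerivAt (fun w => I w k) _ z := (hasFDerivAt_pi'.1 hd.hasFDerivAt) k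
    rw [h.fderiv]
    rfl
  constructor
  · rintro ⟨hd, hsum, h1, h2⟩
    refine ⟨fun z hz => ?_, hsum⟩
    have hdz : DifferentiableAt ℂ I z := hd.differentiableAt (hU.mem_nhds hz)
    have : fderiv ℂ I z = (kzForm z).flip (I z) := by
      have hs : ∀ i, fderiv ℂ I z (Pi.single i 1) = (kzForm z).flip (I z) (Pi.single i 1) := by
        intro i
        funext k
        rw [← hcomp hdz, ContinuousLinearMap.flip_apply]
        refine mul_left_cancel₀ (two_ne_zero (α := ℂ)) ?_
        by_cases hik : i = k
        · subst hik
          rw [h2 z hz, kzForm_single_self]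
        · rw [h1 z hz i k hik, kzForm_single_of_ne z _ hik]
      ext1 v
      rw [pi_eq_sum_univ' v]
      simp only [map_sum, map_smul, hs]
    rw [← this]
    exact hdz.hasFDerivAt
  · rintro ⟨h, hsum⟩
    refine ⟨fun z hz => (h z hz).differentiableAt.differentiableWithinAt, hsum, ?_, ?_⟩
    · intro z hz i k hik
      rw [hcomp (h z hz).differentiableAt, (h z hz).fderiv, ContinuousLinearMap.flip_apply,
        kzForm_single_of_ne z _ hik]
    · intro z hz i
      rw [hcomp (h z hz).differentiableAt, (h z hz).fderiv, ContinuousLinearMap.flip_apply,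
        kzForm_single_self]

/-- A horizontal section of the KZ connection that vanishes at one point vanishes. -/
theorem kz_eqOn_zero {U : Set (Fin n → ℂ)} (hU : IsOpen U) (hc : IsPreconnected U)
    (hdist : ∀ z ∈ U, ∀ i j, i ≠ j → z i ≠ z j) {Y : (Fin n → ℂ) → (Fin n → ℂ)}
    (hY : ∀ z ∈ U, HasFDerivAt Y ((kzForm z).flip (Y z)) z)
    {z₀ : Fin n → ℂ} (hz₀ : z₀ ∈ U) (h0 : Y z₀ = 0) : ∀ z ∈ U, Y z = 0 := by
  refine eqOn_zero_of_norm_fderiv_le hU hc (fun z hz => (hY z hz).restrictScalars ℝ)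
    (fun z hz => ⟨‖kzForm z‖ + 1, ?_⟩) hz₀ h0
  have hn : ContinuousAt (fun w : Fin n → ℂ => ‖kzForm w‖) z :=
    ContinuousAt.norm (E := (Fin n → ℂ) →L[ℂ] (Fin n → ℂ) →L[ℂ] (Fin n → ℂ))
      (contDiffAt_kzForm (hdist z hz)).continuousAt
  filter_upwards [hn.eventually (gt_mem_nhds (lt_add_one ‖kzForm z‖))] with w hw
  rw [ContinuousLinearMap.norm_restrictScalars]
  refine ((kzForm w).flip.le_opNorm _).trans ?_
  rw [ContinuousLinearMap.opNorm_flip]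
  gcongr

/-- Every initial value at `z₀` extends to a horizontal section of the KZ connection. The
fundamental solution is built over `ℝ`; its derivative is complex linear because `kzForm` is. -/
theorem exists_kz_solution {U : Set (Fin n → ℂ)} (hU : IsOpen U)
    (hsc : SimplyConnectedSpace U) (hdist : ∀ z ∈ U, ∀ i j, i ≠ j → z i ≠ z j)
    {z₀ : Fin n → ℂ} (hz₀ : z₀ ∈ U) (v : Fin n → ℂ) :
    ∃ I : (Fin n → ℂ) → (Fin n → ℂ), I z₀ = v ∧
      ∀ z ∈ U, HasFDerivAt I ((kzForm z).flip (I z)) z := by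
  obtain ⟨Ψ, hΨ0, hΨ⟩ := exists_global_fundamental_solution hU hsc
    (fun z hz => contDiffAt_kzFormReal (hdist z hz))
    (fun z hz => kzFormReal_flat (hdist z hz)) hz₀
  refine ⟨fun z => Ψ z v, by simp [hΨ0], fun z hz => ?_⟩
  have h1 : HasFDerivAt (fun z => Ψ z v) _ z :=
    (((ContinuousLinearMap.apply ℂ (Fin n → ℂ) v).restrictScalars ℝ).hasFDerivAt).comp z (hΨ z hz)
  refine hasFDerivAt_of_restrictScalars ℝ h1 ?_
  ext1 u
  rfl

/-- The KZ connection preserves the hyperplane of vectors with coordinate sum zero. -/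
theorem sum_eq_zero_of_kz {U : Set (Fin n → ℂ)} (hU : IsOpen U) (hc : IsPreconnected U)
    {I : (Fin n → ℂ) → (Fin n → ℂ)} (hI : ∀ z ∈ U, HasFDerivAt I ((kzForm z).flip (I z)) z)
    {z₀ : Fin n → ℂ} (hz₀ : z₀ ∈ U) (h0 : ∑ k, I z₀ k = 0) : ∀ z ∈ U, ∑ k, I z k = 0 := by
  refine eqOn_zero_of_norm_fderiv_le (Y' := fun _ => 0) hU hc (fun z hz => ?_)
    (fun z _ => ⟨0, by simp⟩) hz₀ h0
  have h : HasFDerivAt (fun w => ∑ k, I w k) _ z :=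
    HasFDerivAt.fun_sum fun k _ => hasFDerivAt_pi'.1 (hI z hz) k
  convert! h.restrictScalars ℝ using 1
  ext1 u
  simpa using (sum_kzForm_apply z u (I z)).symm

end KZ

end

/-- on a nonempty connected simply connected open set `U ⊆ ℂⁿ` avoiding the
diagonals, the complex vector space of holomorphic solutions of the KZ equations has
dimension exactly `n − 1 = 2g`: there are `2g` solutions, linearly independent as
functions on `U`, such that every solution is a unique `ℂ`-linear combination of them
on `U`. -/
theorem KZ_solution_space_dimension
    (g : ℕ) (hg : 1 ≤ g)
    (U : Set (Fin (2*g+1) → ℂ)) (hne : U.Nonempty) (hU : IsOpen U)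
    (hconn : IsConnected U) (hsc : SimplyConnectedSpace U)
    (hdist : ∀ z ∈ U, ∀ i j : Fin (2*g+1), i ≠ j → z i ≠ z j) :
    ∃ b : Fin (2*g) → ((Fin (2*g+1) → ℂ) → (Fin (2*g+1) → ℂ)),
      (∀ m, IsKZSolution g U (b m)) ∧
      (∀ c : Fin (2*g) → ℂ, (∀ z ∈ U, ∑ m : Fin (2*g), c m • b m z = 0) → c = 0) ∧
      (∀ I, IsKZSolution g U I →
        ∃ c : Fin (2*g) → ℂ, ∀ z ∈ U, I z = ∑ m : Fin (2*g), c m • b m z) := by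
  obtain ⟨z₀, hz₀⟩ := hne
  have hpre := hconn.isPreconnected
  -- initial values at `z₀`: the basis `e_{m+1} - e_0` of the sum-zero hyperplane
  let v : Fin (2*g) → (Fin (2*g+1) → ℂ) := fun m => Pi.single m.succ 1 - Pi.single 0 1
  have hvsucc : ∀ (c : Fin (2*g) → ℂ) (i : Fin (2*g)), (∑ m, c m • v m) i.succ = c i := by
    intro c i
    rw [Finset.sum_apply, Finset.sum_eq_single i]
    · simp [v]
    · intro m _ hm
      simp [v, hm.symm]
    · simp
  have hvsum : ∀ m, ∑ k, v m k = 0 := by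
    intro m
    simp [v, Finset.sum_sub_distrib]
  choose b hb0 hb using fun m => exists_kz_solution hU hsc hdist hz₀ (v m)
  have hbsum : ∀ m, ∀ z ∈ U, ∑ k, b m z k = 0 := fun m =>
    sum_eq_zero_of_kz hU hpre (hb m) hz₀ (by rw [hb0]; exact hvsum m)
  refine ⟨b, fun m => (isKZSolution_iff hU).2 ⟨hb m, hbsum m⟩, ?_, ?_⟩
  · intro c hc
    funext i
    have h := hc z₀ hz₀
    simp only [hb0] at h
    rw [← hvsucc c i, h]
    rfl
  · intro I hI
    obtain ⟨hId, hIsum⟩ := (isKZSolution_iff hU).1 hI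
    let c : Fin (2*g) → ℂ := fun m => I z₀ m.succ
    refine ⟨c, fun z hz => sub_eq_zero.1 ?_⟩
    refine kz_eqOn_zero (Y := fun z => I z - ∑ m, c m • b m z) hU hpre hdist (fun z hz => ?_)
      hz₀ ?_ z hz
    · have h := (hId z hz).fun_sub (HasFDerivAt.fun_sum (u := Finset.univ)
        fun m _ => (hb m z hz).fun_const_smul (c m))
      simpa only [map_sub, map_sum, map_smul] using h
    · simp only [hb0]
      have hs : ∀ i : Fin (2*g), (I z₀ - ∑ m, c m • v m) i.succ = 0 := fun i => by
        rw [Pi.sub_apply, hvsucc, sub_self]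
      have hsum : ∑ k, (I z₀ - ∑ m, c m • v m) k = 0 := by
        simp only [Pi.sub_apply, Finset.sum_apply, Finset.sum_sub_distrib, Pi.smul_apply,
          hIsum z₀ hz₀]
        rw [Finset.sum_comm]
        simp [← Finset.mul_sum, hvsum]
      funext i
      refine Fin.cases ?_ hs i
      rw [Fin.sum_univ_succ, Finset.sum_eq_zero fun i _ => hs i, add_zero] at hsum
      exact hsum
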